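/- The operations Z and 𝓘 give an inclusion-reversing bijection between real radically closed ideals in ℝ[X₁,...,Xₙ] (ideals I with I = ʳ√I) and real algebraic subsets of ℝⁿ. -/

import Mathlib

section Helpers

open Polynomial

set_option linter.unusedSectionVars false


/-- The intermediate value property for polynomials over an ordered field. -/
def PolyIVP (R : Type*) [Field R] [LinearOrder R] : Prop :=
  ∀ (p : R[X]) (a b : R), a < b → p.eval a * p.eval b < 0 → ∃ c, a < c ∧ c < b ∧ p.eval c = 0

section IVP
variable {R : Type*} [Field R] [LinearOrder R] [IsStrictOrderedRing R]

theorem PolyIVP.const_sign (hR : PolyIVP R) {p : R[X]} {a b : R} (hab : a ≤ b)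
    (h : ∀ c, a ≤ c → c ≤ b → p.eval c ≠ 0) : 0 < p.eval a * p.eval b := by
  rcases hab.eq_or_lt with rfl | hab
  · exact mul_self_pos.2 (h a le_rfl le_rfl)
  rcases lt_trichotomy (p.eval a * p.eval b) 0 with h0 | h0 | h0
  · obtain ⟨c, h1, h2, h3⟩ := hR p a b hab h0
    exact absurd h3 (h c h1.le h2.le)
  · rcases mul_eq_zero.1 h0 with h0 | h0
    · exact absurd h0 (h a le_rfl hab.le)
    · exact absurd h0 (h b hab.le le_rfl)
  · exact h0

theorem PolyIVP.const_sign_univ (hR : PolyIVP R) {p : R[X]}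
    (h : ∀ c, p.eval c ≠ 0) (a b : R) : 0 < p.eval a ↔ 0 < p.eval b := by
  have : 0 < p.eval a * p.eval b := by
    rcases le_total a b with hab | hab
    · exact hR.const_sign hab (fun c _ _ => h c)
    · rw [mul_comm]; exact hR.const_sign hab (fun c _ _ => h c)
  constructor
  · intro h1; exact (pos_iff_pos_of_mul_pos this).1 h1
  · intro h1; exact (pos_iff_pos_of_mul_pos this).2 h1

/-- Rolle for consecutive roots. -/
theorem PolyIVP.rolle_aux (hR : PolyIVP R) {p : R[X]} (hp : p ≠ 0) {a b : R} (hab : a < b)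
    (ha : p.eval a = 0) (hb : p.eval b = 0) (h : ∀ c, a < c → c < b → p.eval c ≠ 0) :
    ∃ c, a < c ∧ c < b ∧ p.derivative.eval c = 0 := by
  obtain ⟨q, hq, hqa⟩ := exists_eq_pow_rootMultiplicity_mul_and_not_dvd p hp a
  have hq0 : q ≠ 0 := by rintro rfl; simp at hqa
  obtain ⟨r, hr, hrb⟩ := exists_eq_pow_rootMultiplicity_mul_and_not_dvd q hq0 b
  have hm : 0 < p.rootMultiplicity a := (rootMultiplicity_pos hp).2 ha
  have hqb : q.eval b = 0 := by
    rw [hq] at hb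
    simp only [eval_mul, eval_pow, eval_sub, eval_X, eval_C] at hb
    rcases mul_eq_zero.1 hb with hb | hb
    · exact absurd ((pow_eq_zero_iff hm.ne').1 hb) (sub_ne_zero.2 hab.ne')
    · exact hb
  have hk : 0 < q.rootMultiplicity b := (rootMultiplicity_pos hq0).2 hqb
  obtain ⟨m, hm'⟩ := Nat.exists_eq_succ_of_ne_zero hm.ne'
  obtain ⟨k, hk'⟩ := Nat.exists_eq_succ_of_ne_zero hk.ne'
  rw [hm'] at hq
  rw [hk'] at hr
  rw [dvd_iff_isRoot] at hqa hrb
  have hra : r.eval a ≠ 0 := by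
    intro h0; apply hqa; rw [hr]; simp [h0]
  have hpr : p = (X - C a)^(m+1) * ((X - C b)^(k+1) * r) := by rw [← Nat.succ_eq_add_one, ← Nat.succ_eq_add_one, ← hr, ← hq]
  have hrs : 0 < r.eval a * r.eval b := by
    apply hR.const_sign hab.le
    intro c h1 h2 h3
    rcases h1.eq_or_lt with rfl | h1
    · exact hra h3
    rcases h2.eq_or_lt with rfl | h2
    · exact hrb h3
    · apply h c h1 h2; rw [hpr]; simp [h3]
  let g : R[X] := (C ((m:R)+1) * (X - C b) + C ((k:R)+1) * (X - C a)) * r + (X - C a) * (X - C b) * r.derivative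
  have hd : p.derivative = (X - C a)^m * (X - C b)^k * g := by
    rw [hpr]
    simp only [derivative_mul, derivative_pow, derivative_sub, derivative_X, derivative_C, g]
    simp
    ring
  have hg : g.eval a * g.eval b < 0 := by
    simp [g]
    have h1 : 0 < b - a := sub_pos.2 hab
    have hm1 : (0:R) < (m:R)+1 := by positivity
    have hk1 : (0:R) < (k:R)+1 := by positivity
    have : 0 < (((m:R)+1) * (b-a)) * (((k:R)+1) * (b-a)) * (r.eval a * r.eval b) := by positivity
    nlinarith
  obtain ⟨c, h1, h2, h3⟩ := hR g a b hab hg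
  exact ⟨c, h1, h2, by rw [hd]; simp [h3]⟩

theorem PolyIVP.rolle (hR : PolyIVP R) {p : R[X]} {a b : R} (hab : a < b)
    (ha : p.eval a = 0) (hb : p.eval b = 0) :
    ∃ c, a < c ∧ c < b ∧ p.derivative.eval c = 0 := by
  by_cases hp : p = 0
  · obtain ⟨c, h1, h2⟩ := exists_between hab
    exact ⟨c, h1, h2, by simp [hp]⟩
  let s := p.roots.toFinset.filter (fun x => a < x)
  have hbs : b ∈ s := by simp [s, hp, hab, hb]
  obtain ⟨b', hb', hmin⟩ := s.exists_min_image id ⟨b, hbs⟩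
  have hb'' := hb'
  simp only [s, Finset.mem_filter, Multiset.mem_toFinset, mem_roots hp, IsRoot.def] at hb'
  obtain ⟨c, h1, h2, h3⟩ := hR.rolle_aux hp hb'.2 ha hb'.1 (by
    intro c h1 h2 h3
    have : c ∈ s := by simp [s, hp, h1, h3]
    exact absurd (hmin c this) (not_le.2 h2))
  exact ⟨c, h1, h2.trans_le (hmin b hbs), h3⟩

theorem PolyIVP.unique (hR : PolyIVP R) {p : R[X]} {a b : R}
    (h : ∀ c, a < c → c < b → p.derivative.eval c ≠ 0) {x y : R}
    (hx : a < x) (hxb : x < b) (hy : a < y) (hyb : y < b) (hpx : p.eval x = 0)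
    (hpy : p.eval y = 0) : x = y := by
  rcases lt_trichotomy x y with h0 | h0 | h0
  · obtain ⟨c, h1, h2, h3⟩ := hR.rolle h0 hpx hpy
    exact absurd h3 (h c (hx.trans h1) (h2.trans hyb))
  · exact h0
  · obtain ⟨c, h1, h2, h3⟩ := hR.rolle h0 hpy hpx
    exact absurd h3 (h c (hy.trans h1) (h2.trans hxb))

theorem PolyIVP.sign_change (hR : PolyIVP R) {p : R[X]} {a b x : R}
    (h : ∀ c, a < c → c < b → p.derivative.eval c ≠ 0)
    (hx : a < x) (hxb : x < b) (hpx : p.eval x = 0)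
    (ha : p.eval a ≠ 0) (hb : p.eval b ≠ 0) : p.eval a * p.eval b < 0 := by
  obtain ⟨q, rfl⟩ := dvd_iff_isRoot.2 hpx
  have hq : 0 < q.eval a * q.eval b := by
    apply hR.const_sign (hx.trans hxb).le
    intro c h1 h2 h3
    rcases h1.eq_or_lt with rfl | h1
    · simp [h3] at ha
    rcases h2.eq_or_lt with rfl | h2
    · simp [h3] at hb
    have := hR.unique h h1 h2 hx hxb (by simp [h3]) hpx
    subst this
    exact h c h1 h2 (by simp [derivative_mul, h3])
  have : 0 < (x - a) * (b - x) * (q.eval a * q.eval b) := 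
    mul_pos (mul_pos (sub_pos.2 hx) (sub_pos.2 hxb)) hq
  simp
  nlinarith

/-- A root bound. -/
theorem root_bound {p : R[X]} (hd : 0 < p.natDegree) {x : R} (hx : p.eval x = 0) (h1 : 1 < |x|) :
    |p.leadingCoeff| * |x| ≤ ∑ i ∈ Finset.range p.natDegree, |p.coeff i| := by
  rw [eval_eq_sum_range, Finset.sum_range_succ] at hx
  obtain ⟨d, hd⟩ := Nat.exists_eq_succ_of_ne_zero hd.ne'
  have h2 : |p.leadingCoeff| * |x| ^ p.natDegree ≤ (∑ i ∈ Finset.range p.natDegree, |p.coeff i|) * |x|^d := by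
    rw [← abs_pow, ← abs_mul, leadingCoeff, eq_neg_of_add_eq_zero_right hx, abs_neg, Finset.sum_mul]
    refine (Finset.abs_sum_le_sum_abs _ _).trans (Finset.sum_le_sum fun i hi => ?_)
    rw [abs_mul, abs_pow]
    gcongr
    · exact h1.le
    · have := Finset.mem_range.1 hi; omega
  rw [hd, pow_succ, ← hd] at h2
  have hpos : 0 < |x|^d := by positivity
  nlinarith

end IVP



section Step
variable {G R R' : Type*} [Field G] [Field R] [LinearOrder R] [IsStrictOrderedRing R]
  [Field R'] [LinearOrder R'] [IsStrictOrderedRing R']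

/-- All roots of `q` in `R` come from `G`. -/
def RootsIn (i : G →+* R) (q : G[X]) : Prop := ∀ x, eval₂ i x q = 0 → ∃ g, i g = x

theorem signEq_neg {i : G →+* R} {j : G →+* R'} (hs : ∀ g, 0 < i g ↔ 0 < j g) (g : G) :
    i g < 0 ↔ j g < 0 := by
  have := hs (-g)
  simpa using this

theorem sign_lt {i : G →+* R} {j : G →+* R'} (hs : ∀ g, 0 < i g ↔ 0 < j g) (g h : G) :
    i g < i h ↔ j g < j h := by
  have := hs (h - g)
  simpa using this

theorem pos_mul_iff_aux {a b : R} {a' b' : R'} (ha0 : a ≠ 0) (ha0' : a' ≠ 0)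
    (ha : 0 < a ↔ 0 < a') (hb : 0 < b ↔ 0 < b') (hb0 : b ≠ 0) (hb0' : b' ≠ 0) :
    0 < a * b ↔ 0 < a' * b' := by
  have ha2 : a < 0 ↔ a' < 0 := by
    rw [← not_le, ← not_le, le_iff_lt_or_eq, le_iff_lt_or_eq, ha]; simp [ha0.symm, ha0'.symm]
  have hb2 : b < 0 ↔ b' < 0 := by
    rw [← not_le, ← not_le, le_iff_lt_or_eq, le_iff_lt_or_eq, hb]; simp [hb0.symm, hb0'.symm]
  rw [mul_pos_iff, mul_pos_iff, ha, hb, ha2, hb2]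

theorem cut_sign (hR : PolyIVP R) (hR' : PolyIVP R') {i : G →+* R} {j : G →+* R'}
    (hs : ∀ g, 0 < i g ↔ 0 < j g) {a : R} {a' : R'} (hc : ∀ g, i g < a ↔ j g < a')
    (ha : ∀ g, i g ≠ a) (ha' : ∀ g, j g ≠ a') (q : G[X]) (hq0 : q ≠ 0)
    (hq : RootsIn i q) (hq' : RootsIn j q) :
    eval₂ i a q ≠ 0 ∧ eval₂ j a' q ≠ 0 ∧ (0 < eval₂ i a q ↔ 0 < eval₂ j a' q) := by
  refine ⟨fun h => (hq a h).elim fun g hg => ha g hg, fun h => (hq' a' h).elim fun g hg => ha' g hg, ?_⟩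
  induction hn : q.natDegree using Nat.strong_induction_on generalizing q with
  | _ n ih =>
  by_cases hr : ∃ c, q.eval c = 0
  · obtain ⟨c, hc0⟩ := hr
    obtain ⟨h, rfl⟩ := dvd_iff_isRoot.2 hc0
    have hh0 : h ≠ 0 := by rintro rfl; simp at hq0
    have h1 : RootsIn i h := fun x hx => hq x (by simp [eval₂_mul, hx])
    have h2 : RootsIn j h := fun x hx => hq' x (by simp [eval₂_mul, hx])
    have := ih h.natDegree (by rw [← hn, natDegree_mul (X_sub_C_ne_zero c) hh0, natDegree_X_sub_C]; omega) h hh0 h1 h2 rfl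
    rw [eval₂_mul, eval₂_mul]
    simp only [eval₂_sub, eval₂_X, eval₂_C]
    apply pos_mul_iff_aux _ _ _ this
    · exact fun h => (h1 a h).elim fun g hg => ha g hg
    · exact fun h => (h2 a' h).elim fun g hg => ha' g hg
    · exact sub_ne_zero.2 (ha c).symm
    · exact sub_ne_zero.2 (ha' c).symm
    · simpa using hc c
  · push Not at hr
    have h1 : ∀ x, (q.map i).eval x ≠ 0 := by
      intro x hx
      rw [eval_map] at hx
      obtain ⟨g, rfl⟩ := hq x hx
      rw [eval₂_at_apply] at hx
      exact hr g (by simpa using hx)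
    have h2 : ∀ x, (q.map j).eval x ≠ 0 := by
      intro x hx
      rw [eval_map] at hx
      obtain ⟨g, rfl⟩ := hq' x hx
      rw [eval₂_at_apply] at hx
      exact hr g (by simpa using hx)
    have e1 := hR.const_sign_univ h1 a (i 0)
    have e2 := hR'.const_sign_univ h2 a' (j 0)
    rw [eval_map, eval_map, eval₂_at_apply] at e1 e2
    rw [e1, e2, hs]

/-- bounds for an algebraic element -/
theorem exists_bound (i : G →+* R) {p : G[X]} (hp : p ≠ 0) {a : R} (ha : eval₂ i a p = 0) :
    ∃ M, |a| < i M := by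
  have hd : 0 < (p.map i).natDegree := by
    rw [natDegree_map]
    by_contra h
    rw [eq_C_of_natDegree_eq_zero (by omega : p.natDegree = 0)] at ha hp
    simp at ha hp
    exact hp ha
  by_cases h1 : 1 < |a|
  · have := root_bound hd (by rwa [eval_map]) h1
    have hb : ∀ x : R, |x| ≤ x^2 + 1 := fun x => by
      nlinarith [sq_abs x, sq_nonneg (|x| - 1), abs_nonneg x]
    have hS : ∑ k ∈ Finset.range (p.map i).natDegree, |(p.map i).coeff k| ≤
        i (∑ k ∈ Finset.range (p.map i).natDegree, ((p.coeff k)^2+1)) := by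
      rw [map_sum]
      refine Finset.sum_le_sum fun k _ => ?_
      simpa using hb (i (p.coeff k))
    set S := ∑ k ∈ Finset.range (p.map i).natDegree, ((p.coeff k)^2+1)
    have hl : (p.map i).leadingCoeff ≠ 0 := by
      simpa using hp
    have hl' : |(p.map i).leadingCoeff⁻¹| ≤ i (p.leadingCoeff⁻¹ ^ 2 + 1) := by
      simpa using hb ((p.map i).leadingCoeff⁻¹)
    refine ⟨S * (p.leadingCoeff⁻¹ ^ 2 + 1) + 1, ?_⟩
    have h3 : |a| = (|(p.map i).leadingCoeff| * |a|) * |(p.map i).leadingCoeff⁻¹| := by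
      rw [abs_inv]
      have := abs_pos.2 hl
      field_simp
    rw [map_add, map_mul, map_one, h3]
    have h4 : 0 ≤ |(p.map i).leadingCoeff| * |a| := by positivity
    have h5 : (|(p.map i).leadingCoeff| * |a|) * |(p.map i).leadingCoeff⁻¹| ≤ i S * i (p.leadingCoeff⁻¹ ^ 2 + 1) := by
      apply mul_le_mul (this.trans hS) hl' (abs_nonneg _) (h4.trans (this.trans hS))
    linarith
  · exact ⟨2, by rw [map_ofNat]; linarith⟩

theorem exists_lower (i : G →+* R) {p q : G[X]} (hp : p ≠ 0) (hq : q ≠ 0) {a : R}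
    (ha : eval₂ i a p = 0) (hqr : RootsIn i q) : 
    ∃ u, i u < a ∧ ∀ c, i u < c → c < a → (q.map i).eval c ≠ 0 := by
  classical
  obtain ⟨M, hM⟩ := exists_bound i hp ha
  let s := insert (i (-M)) ((q.map i).roots.toFinset.filter (fun x => x < a))
  have hq' : q.map i ≠ 0 := by rwa [Ne, Polynomial.map_eq_zero]
  obtain ⟨u, hu, hmax⟩ := s.exists_max_image id ⟨i (-M), by simp [s]⟩
  have hur : ∃ g, i g = u ∧ u < a := by
    simp only [s, Finset.mem_insert, Finset.mem_filter, Multiset.mem_toFinset, mem_roots hq', IsRoot.def] at hu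
    rcases hu with rfl | ⟨h1, h2⟩
    · exact ⟨_, rfl, by rw [map_neg]; linarith [neg_abs_le a]⟩
    · rw [eval_map] at h1
      obtain ⟨g, hg⟩ := hqr _ h1
      exact ⟨g, hg, h2⟩
  obtain ⟨g, rfl, hua⟩ := hur
  refine ⟨g, hua, fun c h1 h2 h3 => ?_⟩
  have : c ∈ s := by
    apply Finset.mem_insert_of_mem
    simp only [Finset.mem_filter, Multiset.mem_toFinset, mem_roots hq', IsRoot.def]
    exact ⟨h3, h2⟩
  exact absurd (hmax c this) (not_le.2 h1)

theorem exists_upper (i : G →+* R) {p q : G[X]} (hp : p ≠ 0) (hq : q ≠ 0) {a : R}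
    (ha : eval₂ i a p = 0) (hqr : RootsIn i q) : 
    ∃ u, a < i u ∧ ∀ c, a < c → c < i u → (q.map i).eval c ≠ 0 := by
  classical
  obtain ⟨M, hM⟩ := exists_bound i hp ha
  let s := insert (i M) ((q.map i).roots.toFinset.filter (fun x => a < x))
  have hq' : q.map i ≠ 0 := by rwa [Ne, Polynomial.map_eq_zero]
  obtain ⟨u, hu, hmax⟩ := s.exists_min_image id ⟨i M, by simp [s]⟩
  have hur : ∃ g, i g = u ∧ a < u := by
    simp only [s, Finset.mem_insert, Finset.mem_filter, Multiset.mem_toFinset, mem_roots hq', IsRoot.def] at hu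
    rcases hu with rfl | ⟨h1, h2⟩
    · exact ⟨_, rfl, by linarith [le_abs_self a]⟩
    · rw [eval_map] at h1
      obtain ⟨g, hg⟩ := hqr _ h1
      exact ⟨g, hg, h2⟩
  obtain ⟨g, rfl, hua⟩ := hur
  refine ⟨g, hua, fun c h1 h2 h3 => ?_⟩
  have : c ∈ s := by
    apply Finset.mem_insert_of_mem
    simp only [Finset.mem_filter, Multiset.mem_toFinset, mem_roots hq', IsRoot.def]
    exact ⟨h3, h1⟩
  exact absurd (hmax c this) (not_le.2 h2)

theorem eval_map_at (i : G →+* R) (p : G[X]) (g : G) : (p.map i).eval (i g) = i (p.eval g) := by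
  rw [eval_map, eval₂_at_apply]

theorem alg_step (hR : PolyIVP R) (hR' : PolyIVP R') {i : G →+* R} {j : G →+* R'}
    (hs : ∀ g, 0 < i g ↔ 0 < j g) {p : G[X]} (hp : p ≠ 0)
    (ih : ∀ q : G[X], q ≠ 0 → q.natDegree < p.natDegree → RootsIn i q ∧ RootsIn j q)
    {a : R} (ha : eval₂ i a p = 0) (har : ∀ g, i g ≠ a) :
    ∃ a' : R', ∀ q, 0 < eval₂ i a q ↔ 0 < eval₂ j a' q := by
  haveI : CharZero G := i.charZero
  have hd : 0 < p.natDegree := by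
    by_contra h
    rw [eq_C_of_natDegree_eq_zero (by omega : p.natDegree = 0)] at ha hp
    simp at ha hp
    exact hp ha
  have hmin : ∀ q : G[X], q ≠ 0 → q.natDegree < p.natDegree → eval₂ i a q ≠ 0 := by
    intro q h1 h2 h3
    obtain ⟨g, hg⟩ := (ih q h1 h2).1 a h3
    exact har g hg
  have hpg : ∀ g, p.eval g ≠ 0 := by
    intro g hg
    obtain ⟨q, rfl⟩ := dvd_iff_isRoot.2 hg
    have hq0 : q ≠ 0 := by rintro rfl; simp at hp
    refine hmin q hq0 (by rw [natDegree_mul (X_sub_C_ne_zero g) hq0, natDegree_X_sub_C]; omega) ?_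
    rw [eval₂_mul] at ha
    rcases mul_eq_zero.1 ha with h | h
    · simp [sub_eq_zero] at h
      exact absurd h.symm (har g)
    · exact h
  have hd0 : p.derivative ≠ 0 := by
    intro h
    have := natDegree_eq_zero_of_derivative_eq_zero h
    omega
  have hdi := ih _ hd0 (natDegree_derivative_lt hd.ne')
  obtain ⟨u, hu, hu'⟩ := exists_lower i hp hd0 ha hdi.1
  obtain ⟨v, hv, hv'⟩ := exists_upper i hp hd0 ha hdi.1
  have hda : (p.derivative.map i).eval a ≠ 0 := by
    rw [eval_map]; exact hmin _ hd0 (natDegree_derivative_lt hd.ne')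
  have huv : ∀ c, i u < c → c < i v → (p.map i).derivative.eval c ≠ 0 := by
    intro c h1 h2
    rw [derivative_map]
    rcases lt_trichotomy c a with h | rfl | h
    · exact hu' c h1 h
    · exact hda
    · exact hv' c h h2
  have huv' : ∀ c, j u < c → c < j v → (p.map j).derivative.eval c ≠ 0 := by
    intro c h1 h2 h3
    rw [derivative_map] at h3
    obtain ⟨g, rfl⟩ := hdi.2 c (by rwa [eval_map] at h3)
    apply huv (i g) ((sign_lt hs _ _).2 h1) ((sign_lt hs _ _).2 h2)
    rw [derivative_map, eval_map_at]
    rw [eval_map_at] at h3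
    simpa using h3
  have ha1 : (p.map i).eval a = 0 := by rwa [eval_map]
  have key : ∀ b c, i u ≤ i b → i b < a → a < i c → i c ≤ i v → ∃ x, j b < x ∧ x < j c ∧ (p.map j).eval x = 0 := by
    intro b c h1 h2 h3 h4
    have := hR.sign_change (p := p.map i) (a := i b) (b := i c) (x := a) 
      (fun x hx hx' => huv x (h1.trans_lt hx) (hx'.trans_le h4)) h2 h3 ha1
      (by rw [eval_map_at]; simpa using hpg b) (by rw [eval_map_at]; simpa using hpg c)
    apply hR' _ _ _ ((sign_lt hs _ _).1 (h2.trans h3))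
    rw [eval_map_at, eval_map_at, ← map_mul] at this ⊢
    exact (signEq_neg hs _).1 this
  obtain ⟨a', h1, h2, h3⟩ := key u v le_rfl hu hv le_rfl
  have hne : ∀ g, j g ≠ a' := by
    rintro g rfl
    rw [eval_map_at] at h3
    exact hpg g (by simpa using h3)
  have hcut : ∀ g, i g < a ↔ j g < a' := by
    intro g
    constructor
    · intro hg
      rcases le_total (i g) (i u) with h | h
      · have : j g ≤ j u := not_lt.1 (fun h' => absurd ((sign_lt hs _ _).2 h') (not_lt.2 h))
        exact this.trans_lt h1
      · obtain ⟨x, hx1, hx2, hx3⟩ := key g v h hg hv le_rfl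
        have hjg : j u ≤ j g := not_lt.1 (fun h' => absurd ((sign_lt hs _ _).2 h') (not_lt.2 h))
        have := hR'.unique huv' (hjg.trans_lt hx1) hx2 h1 h2 hx3 h3
        rwa [← this]
    · intro hg
      by_contra hg'
      have hg'' : a < i g := lt_of_le_of_ne (not_lt.1 hg') (har g).symm
      rcases le_total (i v) (i g) with h | h
      · have : j v ≤ j g := not_lt.1 (fun h' => absurd ((sign_lt hs _ _).2 h') (not_lt.2 h))
        exact absurd (this.trans_lt hg) (not_lt.2 h2.le)
      · obtain ⟨x, hx1, hx2, hx3⟩ := key u g le_rfl hu hg'' h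
        have hjg : j g ≤ j v := not_lt.1 (fun h' => absurd ((sign_lt hs _ _).2 h') (not_lt.2 h))
        have := hR'.unique huv' hx1 (hx2.trans_le hjg) h1 h2 hx3 h3
        rw [this] at hx2
        exact absurd hg (not_lt.2 hx2.le)
  refine ⟨a', fun q => ?_⟩
  have e1 : eval₂ i a q = eval₂ i a (q % p) := by
    conv_lhs => rw [← EuclideanDomain.div_add_mod q p]
    simp [eval₂_add, eval₂_mul, ha]
  have e2 : eval₂ j a' q = eval₂ j a' (q % p) := by
    rw [eval_map] at h3
    conv_lhs => rw [← EuclideanDomain.div_add_mod q p]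
    simp [eval₂_add, eval₂_mul, h3]
  rw [e1, e2]
  by_cases h0 : q % p = 0
  · simp [h0]
  · have := ih (q % p) h0 (natDegree_lt_natDegree h0 (EuclideanDomain.mod_lt q hp))
    exact (cut_sign hR hR' hs hcut har hne _ h0 this.1 this.2).2.2

end Step



section Zorn
variable {R R' : Type*} [Field R] [LinearOrder R] [IsStrictOrderedRing R]
  [Field R'] [LinearOrder R'] [IsStrictOrderedRing R']

/-- A subring of the product on which both coordinates have the same sign. -/
def SameSign (S : Subring (R × R')) : Prop := ∀ g ∈ S, 0 < g.1 ↔ 0 < g.2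

theorem SameSign.extend {S : Subring (R × R')} (a : R) (a' : R')
    (h : ∀ q : S[X], 0 < eval₂ ((RingHom.fst R R').comp S.subtype) a q ↔
      0 < eval₂ ((RingHom.snd R R').comp S.subtype) a' q) :
    ∃ T : Subring (R × R'), S ≤ T ∧ SameSign T ∧ (a, a') ∈ T := by
  refine ⟨(eval₂RingHom S.subtype (a, a')).range, ?_, ?_, ?_⟩
  · intro x hx
    exact ⟨C ⟨x, hx⟩, by simp⟩
  · rintro _ ⟨q, rfl⟩
    have := h q
    have e1 := hom_eval₂ q S.subtype (RingHom.fst R R') (a, a')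
    have e2 := hom_eval₂ q S.subtype (RingHom.snd R R') (a, a')
    simp only [RingHom.coe_fst, RingHom.coe_snd] at e1 e2
    rw [← e1, ← e2] at this
    exact this
  · exact ⟨X, by simp⟩

theorem SameSign.eq_zero_iff {S : Subring (R × R')} (h : SameSign S) {g : R × R'} (hg : g ∈ S) :
    g.1 = 0 ↔ g.2 = 0 := by
  have h1 := h g hg
  have h2 := h (-g) (neg_mem hg)
  simp only [Prod.fst_neg, Prod.snd_neg, Left.neg_pos_iff] at h2
  constructor
  · intro h0
    rw [h0] at h1 h2
    simp at h1 h2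
    exact le_antisymm h1 h2
  · intro h0
    rw [h0] at h1 h2
    simp at h1 h2
    exact le_antisymm h1 h2

theorem exists_maximal_sameSign (S₀ : Subring (R × R')) (h : SameSign S₀) :
    ∃ S, S₀ ≤ S ∧ Maximal SameSign S := by
  refine zorn_le_nonempty₀ {S : Subring (R × R') | SameSign S} ?_ S₀ h
  intro c hc hchain y hy
  refine ⟨sSup c, ?_, fun z hz => le_sSup hz⟩
  intro g hg
  rw [Subring.mem_sSup_of_directedOn ⟨y, hy⟩ hchain.directedOn] at hg
  obtain ⟨T, hT, hgT⟩ := hg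
  exact hc hT g hgT

theorem inv_mem_of_maximal {S : Subring (R × R')} (hS : Maximal SameSign S) {g : R × R'}
    (hg : g ∈ S) : (g.1⁻¹, g.2⁻¹) ∈ S := by
  by_cases h0 : g.1 = 0
  · have h0' := (hS.prop.eq_zero_iff hg).1 h0
    simp only [h0, h0', inv_zero]
    exact zero_mem S
  have h0' : g.2 ≠ 0 := fun h => h0 ((hS.prop.eq_zero_iff hg).2 h)
  obtain ⟨T, hST, hT, hgT⟩ := SameSign.extend (S := S) g.1⁻¹ g.2⁻¹ (by
    intro q
    -- multiply by g^(2N)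
    have : ∃ N : ℕ, ∃ s ∈ S, s.1 = g.1^(2*N) * eval₂ ((RingHom.fst R R').comp S.subtype) g.1⁻¹ q ∧
        s.2 = g.2^(2*N) * eval₂ ((RingHom.snd R R').comp S.subtype) g.2⁻¹ q := by
      refine ⟨q.natDegree, ∑ k ∈ Finset.range (q.natDegree+1), (q.coeff k : R × R') * g^(2*q.natDegree - k), ?_, ?_, ?_⟩
      · exact sum_mem fun k _ => mul_mem (q.coeff k).2 (pow_mem hg _)
      · rw [eval₂_eq_sum_range, Finset.mul_sum, Prod.fst_sum]
        refine Finset.sum_congr rfl fun k hk => ?_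
        have hk' : k ≤ q.natDegree := by have := Finset.mem_range.1 hk; omega
        have : g.1^(2*q.natDegree) = g.1^(2*q.natDegree-k) * g.1^k := by rw [← pow_add]; congr 1; omega
        simp [this]
        field_simp
      · rw [eval₂_eq_sum_range, Finset.mul_sum, Prod.snd_sum]
        refine Finset.sum_congr rfl fun k hk => ?_
        have hk' : k ≤ q.natDegree := by have := Finset.mem_range.1 hk; omega
        have : g.2^(2*q.natDegree) = g.2^(2*q.natDegree-k) * g.2^k := by rw [← pow_add]; congr 1; omega
        simp [this]
        field_simp
    obtain ⟨N, s, hs, h1, h2⟩ := this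
    have hs' := hS.prop s hs
    rw [h1, h2] at hs'
    have p1 : 0 < g.1^(2*N) := by rw [pow_mul]; positivity
    have p2 : 0 < g.2^(2*N) := by rw [pow_mul]; positivity
    rwa [mul_pos_iff_of_pos_left p1, mul_pos_iff_of_pos_left p2] at hs')
  exact hS.le_of_ge hT hST hgT

theorem swap_rootsIn {G : Type*} [Field G] (hR : PolyIVP R) (hR' : PolyIVP R')
    {i : G →+* R} {j : G →+* R'} (hs : ∀ g, 0 < i g ↔ 0 < j g)
    (hmax : ∀ a a', (∀ q, 0 < eval₂ i a q ↔ 0 < eval₂ j a' q) → ∃ g, i g = a ∧ j g = a')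
    (q : G[X]) (hq : q ≠ 0) : RootsIn i q ∧ RootsIn j q := by
  induction hn : q.natDegree using Nat.strong_induction_on generalizing q with
  | _ n ih =>
  have ih' : ∀ r : G[X], r ≠ 0 → r.natDegree < q.natDegree → RootsIn i r ∧ RootsIn j r :=
    fun r h1 h2 => ih _ (hn ▸ h2) r h1 rfl
  constructor
  · intro a ha
    by_contra hcon
    push Not at hcon
    obtain ⟨a', h⟩ := alg_step hR hR' hs hq ih' ha hcon
    obtain ⟨g, hg, -⟩ := hmax a a' h
    exact hcon g hg
  · intro a ha
    by_contra hcon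
    push Not at hcon
    obtain ⟨a', h⟩ := alg_step hR' hR (fun g => (hs g).symm) hq (fun r h1 h2 => (ih' r h1 h2).symm) ha hcon
    obtain ⟨g, -, hg⟩ := hmax a' a (fun q => (h q).symm)
    exact hcon g hg

theorem exists_extension (hR : PolyIVP R) (hR' : PolyIVP R') (S₀ : Subring (R × R'))
    (h : SameSign S₀) : ∃ (S : Subring (R × R')) (K : Subfield R), S₀ ≤ S ∧ SameSign S ∧
      (∀ x, x ∈ K ↔ ∃ x', (x, x') ∈ S) ∧ ∀ x, IsAlgebraic K x → x ∈ K := by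
  obtain ⟨S, hS0, hS⟩ := exists_maximal_sameSign S₀ h
  have hinj : ∀ g ∈ S, g.1 = 0 → g = 0 := fun g hg h0 =>
    Prod.ext h0 ((hS.prop.eq_zero_iff hg).1 h0)
  have hfield : IsField S := by
    refine ⟨⟨0, 1, zero_ne_one⟩, mul_comm, ?_⟩
    intro a ha
    refine ⟨⟨_, inv_mem_of_maximal hS a.2⟩, ?_⟩
    have h1 : (a : R × R').1 ≠ 0 := fun h => ha (Subtype.ext (hinj _ a.2 h))
    have h2 : (a : R × R').2 ≠ 0 := fun h => h1 ((hS.prop.eq_zero_iff a.2).2 h)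
    apply Subtype.ext
    apply Prod.ext
    · simp [h1]
    · simp [h2]
  let K : Subfield R :=
    { S.map (RingHom.fst R R') with
      inv_mem' := by
        rintro _ ⟨g, hg, rfl⟩
        exact ⟨_, inv_mem_of_maximal hS hg, rfl⟩ }
  have hK : ∀ x, x ∈ K ↔ ∃ x', (x, x') ∈ S := by
    intro x
    constructor
    · rintro ⟨g, hg, rfl⟩
      exact ⟨g.2, hg⟩
    · rintro ⟨x', hx⟩
      exact ⟨(x, x'), hx, rfl⟩
  refine ⟨S, K, hS0, hS.prop, hK, ?_⟩
  intro x hx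
  letI : Field S := hfield.toField
  let i : S →+* R := (RingHom.fst R R').comp S.subtype
  let j : S →+* R' := (RingHom.snd R R').comp S.subtype
  have hroots := swap_rootsIn (i := i) (j := j) hR hR' (fun g => hS.prop g g.2) (by
    intro a a' haa
    obtain ⟨T, h1, h2, h3⟩ := SameSign.extend a a' haa
    exact ⟨⟨(a, a'), hS.le_of_ge h2 h1 h3⟩, rfl, rfl⟩)
  obtain ⟨p, hp0, hp⟩ := hx
  let e : S →+* K := i.codRestrict K (fun g => (hK _).2 ⟨_, g.2⟩)
  have he : Function.Surjective e := by
    rintro ⟨y, hy⟩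
    obtain ⟨y', hy'⟩ := (hK y).1 hy
    exact ⟨⟨(y, y'), hy'⟩, rfl⟩
  obtain ⟨q, rfl⟩ := Polynomial.map_surjective e he p
  have hq0 : q ≠ 0 := by rintro rfl; simp at hp0
  have := (hroots q hq0).1 x (by
    rw [aeval_def, eval₂_map] at hp
    exact hp)
  obtain ⟨g, rfl⟩ := this
  exact (hK _).2 ⟨_, g.2⟩

end Zorn



section Ultra
variable {E R R' : Type*} [Field E] [LinearOrder E] [IsStrictOrderedRing E]
  [Field R] [LinearOrder R] [IsStrictOrderedRing R]
  [Field R'] [LinearOrder R'] [IsStrictOrderedRing R']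

theorem PolyIVP.germ (hE : PolyIVP E) {ι : Type*} (φ : Ultrafilter ι) :
    PolyIVP (Filter.Germ (φ : Filter ι) E) := by
  intro p a b hab hp
  let π : (ι → E) →+* Filter.Germ (φ : Filter ι) E := Filter.Germ.coeRingHom (φ : Filter ι)
  have hπ : Function.Surjective π := fun x => x.inductionOn fun f => ⟨f, rfl⟩
  obtain ⟨P, rfl⟩ := Polynomial.map_surjective π hπ p
  obtain ⟨a, rfl⟩ := hπ a
  obtain ⟨b, rfl⟩ := hπ b
  have ev : ∀ (f : ι → E) k, (P.map (Pi.evalRingHom (fun _ => E) k)).eval (f k) = (P.eval f) k := by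
    intro f k
    rw [eval_map]
    exact eval₂_at_apply (Pi.evalRingHom (fun _ => E) k) f
  have evπ : ∀ f, (P.map π).eval (π f) = π (P.eval f) := fun f => by rw [eval_map, eval₂_at_apply]
  rw [evπ, evπ, ← map_mul] at hp
  have hp' : ∀ᶠ k in (φ : Filter ι), (P.eval a * P.eval b) k < 0 := Filter.Germ.coe_lt.1 hp
  have hab' : ∀ᶠ k in (φ : Filter ι), a k < b k := Filter.Germ.coe_lt.1 hab
  have hall : ∀ k, ∃ c, (a k < b k → (P.eval a * P.eval b) k < 0 →
      (a k < c ∧ c < b k ∧ (P.map (Pi.evalRingHom (fun _ => E) k)).eval c = 0)) := by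
    intro k
    by_cases h1 : a k < b k
    · by_cases h2 : (P.eval a * P.eval b) k < 0
      · obtain ⟨c, hc⟩ := hE (P.map (Pi.evalRingHom (fun _ => E) k)) (a k) (b k) h1 (by
          rw [ev, ev]; exact h2)
        exact ⟨c, fun _ _ => hc⟩
      · exact ⟨0, fun _ h => absurd h h2⟩
    · exact ⟨0, fun h => absurd h h1⟩
  choose c hc using hall
  refine ⟨π c, ?_, ?_, ?_⟩
  · refine Filter.Germ.coe_lt.2 ?_
    filter_upwards [hp', hab'] with k h1 h2 using (hc k h2 h1).1
  · refine Filter.Germ.coe_lt.2 ?_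
    filter_upwards [hp', hab'] with k h1 h2 using (hc k h2 h1).2.1
  · rw [evπ]
    refine Filter.Germ.coe_eq.2 ?_
    filter_upwards [hp', hab'] with k h1 h2
    have := (hc k h2 h1).2.2
    rw [ev] at this
    exact this

theorem transfer (hR : PolyIVP R) (hR' : PolyIVP R') {E : Type*} [Field E] (i : E →+* R) (j : E →+* R')
    (S₀ : Subring (R × R')) (hS₀ : SameSign S₀) (hE : ∀ e, (i e, j e) ∈ S₀) {n : ℕ} (x : Fin n → R)
    (hx : ∀ k, ∀ K : Subfield R, (∀ y ∈ S₀, y.1 ∈ K) → (∀ y, IsAlgebraic K y → y ∈ K) → x k ∈ K) :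
    ∃ x' : Fin n → R', ∀ p : MvPolynomial (Fin n) E,
      MvPolynomial.eval₂ i x p = 0 ↔ MvPolynomial.eval₂ j x' p = 0 := by
  obtain ⟨S, K, h1, h2, h3, h4⟩ := exists_extension hR hR' S₀ hS₀
  have : ∀ k, ∃ x', (x k, x') ∈ S := fun k =>
    (h3 _).1 (hx k K (fun y hy => (h3 _).2 ⟨y.2, h1 hy⟩) h4)
  choose x' hx' using this
  refine ⟨x', fun p => ?_⟩
  have hmem : MvPolynomial.eval₂ (i.prod j) (fun k => (x k, x' k)) p ∈ S := by
    induction p using MvPolynomial.induction_on with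
    | C a => simpa using h1 (hE a)
    | add p q hp hq => rw [MvPolynomial.eval₂_add]; exact add_mem hp hq
    | mul_X p k hp => rw [MvPolynomial.eval₂_mul, MvPolynomial.eval₂_X]; exact mul_mem hp (hx' k)
  have e1 := MvPolynomial.eval₂_comp_left (RingHom.fst R R') (i.prod j) (fun k => (x k, x' k)) p
  have e2 := MvPolynomial.eval₂_comp_left (RingHom.snd R R') (i.prod j) (fun k => (x k, x' k)) p
  have := h2.eq_zero_iff hmem
  simp only [RingHom.coe_fst, RingHom.coe_snd] at e1 e2
  rw [e1, e2] at this
  exact this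

theorem PolyIVP.sub (hR : PolyIVP R) (i : E →+* R) (hi : ∀ g, 0 < g ↔ 0 < i g)
    (hroots : ∀ q : E[X], q ≠ 0 → RootsIn i q) : PolyIVP E := by
  intro p a b hab hp
  have hlt : ∀ a b, a < b ↔ i a < i b := fun a b => by
    have := hi (b - a); simpa using this
  have hp0 : p ≠ 0 := by rintro rfl; simp at hp
  obtain ⟨c, h1, h2, h3⟩ := hR (p.map i) (i a) (i b) ((hlt _ _).1 hab) (by
    rw [eval_map_at, eval_map_at, ← map_mul, ← map_zero i]; exact (hlt _ _).1 hp)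
  obtain ⟨c, rfl⟩ := hroots p hp0 c (by rwa [eval_map] at h3)
  rw [eval_map_at] at h3
  exact ⟨c, (hlt _ _).2 h1, (hlt _ _).2 h2, by simpa using h3⟩

theorem rootsIn_germ {ι : Type*} (φ : Ultrafilter ι) (j : E →+* Filter.Germ (φ : Filter ι) E)
    (hj : ∀ e, j e = ((fun _ => e : ι → E) : Filter.Germ (φ : Filter ι) E)) (q : E[X]) (hq : q ≠ 0) :
    RootsIn j q := by
  induction hn : q.natDegree using Nat.strong_induction_on generalizing q with
  | _ n ih =>
  intro x hx
  by_cases hr : ∃ c, q.eval c = 0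
  · obtain ⟨c, hc0⟩ := hr
    obtain ⟨h, rfl⟩ := dvd_iff_isRoot.2 hc0
    have hh0 : h ≠ 0 := by rintro rfl; simp at hq
    rw [eval₂_mul] at hx
    rcases mul_eq_zero.1 hx with hx | hx
    · simp [sub_eq_zero] at hx
      exact ⟨c, hx.symm⟩
    · exact ih h.natDegree (by rw [← hn, natDegree_mul (X_sub_C_ne_zero c) hh0, natDegree_X_sub_C]; omega) h hh0 rfl x hx
  · exfalso
    push Not at hr
    let π : (ι → E) →+* Filter.Germ (φ : Filter ι) E := Filter.Germ.coeRingHom (φ : Filter ι)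
    have hπ : Function.Surjective π := fun x => x.inductionOn fun f => ⟨f, rfl⟩
    obtain ⟨f, rfl⟩ := hπ x
    have hjc : j = π.comp (Pi.constRingHom ι E) := RingHom.ext fun e => hj e
    rw [hjc, ← hom_eval₂] at hx
    have hx' : ∀ᶠ k in (φ : Filter ι), (eval₂ (Pi.constRingHom ι E) f q) k = 0 := Filter.Germ.coe_eq.1 hx
    obtain ⟨k, hk⟩ := hx'.exists
    have e := hom_eval₂ q (Pi.constRingHom ι E) (Pi.evalRingHom (fun _ => E) k) f
    apply hr (f k)
    have e3 : (Pi.evalRingHom (fun _ => E) k).comp (Pi.constRingHom ι E) = RingHom.id E := rfl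
    rw [e3] at e
    exact e.symm.trans hk

theorem descend (hR : PolyIVP R) (i : E →+* R) (hi : ∀ g, 0 < g ↔ 0 < i g)
    (hroots : ∀ q : E[X], q ≠ 0 → RootsIn i q) (t : R) {n : ℕ} (x : Fin n → R)
    (hx : ∀ k, ∀ K : Subfield R, (∀ e, i e ∈ K) → t ∈ K → (∀ y, IsAlgebraic K y → y ∈ K) → x k ∈ K)
    (h f : MvPolynomial (Fin n) E) (hh : MvPolynomial.eval₂ i x h = 0)
    (hf : MvPolynomial.eval₂ i x f ≠ 0) :
    ∃ y : Fin n → E, MvPolynomial.eval y h = 0 ∧ MvPolynomial.eval y f ≠ 0 := by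
  classical
  by_cases ht : ∃ e, i e = t
  · obtain ⟨e, rfl⟩ := ht
    have : ∀ k, ∃ y, i y = x k := by
      intro k
      refine hx k i.fieldRange (fun e => ⟨e, rfl⟩) ⟨e, rfl⟩ ?_
      rintro y ⟨p, hp0, hp⟩
      obtain ⟨q, rfl⟩ := Polynomial.map_surjective i.rangeRestrictField
        i.rangeRestrictField_bijective.surjective p
      rw [aeval_def, eval₂_map] at hp
      exact hroots q (by rintro rfl; simp at hp0) y hp
    choose y hy using this
    obtain rfl : x = i ∘ y := funext fun k => (hy k).symm
    have e : ∀ p, MvPolynomial.eval₂ i (i ∘ y) p = i (MvPolynomial.eval y p) := by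
      intro p
      rw [MvPolynomial.eval, MvPolynomial.coe_eval₂Hom, MvPolynomial.eval₂_comp_left, RingHom.comp_id]
    rw [e] at hh hf
    exact ⟨y, by simpa using hh, by simpa using hf⟩
  push Not at ht
  have hlt : ∀ a b, a < b ↔ i a < i b := fun a b => by
    have := hi (b - a); simpa using this
  have hE : PolyIVP E := hR.sub i hi hroots
  let φ : Ultrafilter (Finset E) := Ultrafilter.of Filter.atTop
  have hφ : (φ : Filter (Finset E)) ≤ Filter.atTop := Ultrafilter.of_le _
  let π : (Finset E → E) →+* Filter.Germ (φ : Filter (Finset E)) E := Filter.Germ.coeRingHom (φ : Filter (Finset E))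
  have hπ : Function.Surjective π := fun x => x.inductionOn fun f => ⟨f, rfl⟩
  let j : E →+* Filter.Germ (φ : Filter (Finset E)) E := π.comp (Pi.constRingHom _ E)
  have hτ : ∀ F : Finset E, ∃ m : E, ∀ c ∈ F, (i c < t → c < m) ∧ (t < i c → m < c) := by
    intro F
    obtain ⟨m, h1, h2⟩ := Order.exists_between_finsets (F.filter fun c => i c < t) (F.filter fun c => t < i c) (by
      intro a ha b hb
      rw [hlt]
      exact (Finset.mem_filter.1 ha).2.trans (Finset.mem_filter.1 hb).2)
    exact ⟨m, fun c hc => ⟨fun h => h1 c (Finset.mem_filter.2 ⟨hc, h⟩), fun h => h2 c (Finset.mem_filter.2 ⟨hc, h⟩)⟩⟩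
  choose τ hτ using hτ
  have hev : ∀ c : E, ∀ᶠ F in (φ : Filter (Finset E)), c ∈ F := by
    intro c
    apply hφ
    filter_upwards [Filter.eventually_ge_atTop {c}] with F hF
    exact hF (Finset.mem_singleton_self c)
  have h1 : ∀ c, i c < t → j c < π τ := by
    intro c hc
    refine Filter.Germ.coe_lt.2 ?_
    filter_upwards [hev c] with F hF using (hτ F c hF).1 hc
  have h2 : ∀ c, t < i c → π τ < j c := by
    intro c hc
    refine Filter.Germ.coe_lt.2 ?_
    filter_upwards [hev c] with F hF using (hτ F c hF).2 hc
  have hj : ∀ g, 0 < i g ↔ 0 < j g := by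
    intro g
    rw [← hi]
    exact (Filter.Germ.coe_lt.trans Filter.eventually_const).symm
  have hcut : ∀ g, i g < t ↔ j g < π τ := by
    intro g
    refine ⟨h1 g, fun h => ?_⟩
    by_contra hc
    exact absurd (h2 g (lt_of_le_of_ne (not_lt.1 hc) (ht g).symm)) (not_lt.2 h.le)
  have hne : ∀ g, j g ≠ π τ := by
    intro g hg
    rcases lt_or_gt_of_ne (ht g) with h | h
    · exact absurd (h1 g h) (by rw [hg]; exact lt_irrefl _)
    · exact absurd (h2 g h) (by rw [hg]; exact lt_irrefl _)
  have hS₀ : SameSign (eval₂RingHom (i.prod j) (t, π τ)).range := by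
    rintro _ ⟨q, rfl⟩
    have e1 := hom_eval₂ q (i.prod j) (RingHom.fst _ _) (t, π τ)
    have e2 := hom_eval₂ q (i.prod j) (RingHom.snd _ _) (t, π τ)
    simp only [RingHom.coe_fst, RingHom.coe_snd] at e1 e2
    rw [coe_eval₂RingHom, e1, e2]
    by_cases hq : q = 0
    · simp [hq]
    exact (cut_sign hR (hE.germ φ) hj hcut ht hne q hq (hroots q hq) (rootsIn_germ φ j (fun _ => rfl) q hq)).2.2
  obtain ⟨x', hx'⟩ := transfer hR (hE.germ φ) i j _ hS₀ (fun e => ⟨C e, by simp⟩) x (by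
    intro k K hK hK'
    exact hx k K (fun e => hK (i e, j e) ⟨C e, by simp⟩) (hK (t, π τ) ⟨X, by simp⟩) hK')
  rw [hx'] at hh
  rw [Ne, hx'] at hf
  have : ∀ k, ∃ y, π y = x' k := fun k => hπ _
  choose y hy using this
  obtain rfl : x' = π ∘ y := funext fun k => (hy k).symm
  have ev : ∀ (p : MvPolynomial (Fin n) E), MvPolynomial.eval₂ j (π ∘ y) p =
      π (fun F => MvPolynomial.eval (fun k => y k F) p) := by
    intro p
    rw [← MvPolynomial.eval₂_comp_left]
    congr 1
    funext F
    have := MvPolynomial.eval₂_comp_left (Pi.evalRingHom (fun _ : Finset E => E) F) (Pi.constRingHom _ E) y p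
    exact this
  rw [ev] at hh hf
  have hh' : ∀ᶠ F in (φ : Filter (Finset E)), MvPolynomial.eval (fun k => y k F) h = 0 := Filter.Germ.coe_eq.1 hh
  have hf' : ∀ᶠ F in (φ : Filter (Finset E)), ¬ MvPolynomial.eval (fun k => y k F) f = 0 := by
    rw [Ultrafilter.eventually_not]
    intro h
    exact hf (Filter.Germ.coe_eq.2 h)
  obtain ⟨F, h3, h4⟩ := (hh'.and hf').exists
  exact ⟨_, h3, h4⟩

end Ultra

theorem polyIVP_real : PolyIVP ℝ := by
  intro p a b hab hp
  have hc : ContinuousOn (fun x => p.eval x) (Set.Icc a b) := p.continuous.continuousOn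
  rcases mul_neg_iff.1 hp with ⟨h1, h2⟩ | ⟨h1, h2⟩
  · obtain ⟨c, hc1, hc2⟩ := intermediate_value_Ioo' hab.le hc ⟨h2, h1⟩
    exact ⟨c, hc1.1, hc1.2, hc2⟩
  · obtain ⟨c, hc1, hc2⟩ := intermediate_value_Ioo hab.le hc ⟨h1, h2⟩
    exact ⟨c, hc1.1, hc1.2, hc2⟩

theorem real_hom_pos {R : Type*} [Field R] [LinearOrder R] [IsStrictOrderedRing R] (i : ℝ →+* R) (g : ℝ) :
    0 < g ↔ 0 < i g := by
  have h : ∀ g, 0 < g → 0 < i g := by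
    intro g hg
    have : i g = i (Real.sqrt g) * i (Real.sqrt g) := by
      rw [← map_mul, Real.mul_self_sqrt hg.le]
    rw [this]
    exact mul_self_pos.2 (by simpa using (Real.sqrt_pos.2 hg).ne')
  refine ⟨h g, fun hg => ?_⟩
  rcases lt_trichotomy g 0 with h0 | h0 | h0
  · have := h (-g) (by linarith)
    rw [map_neg] at this
    linarith
  · simp [h0] at hg
  · exact h0

theorem real_point {R : Type*} [Field R] [LinearOrder R] [IsStrictOrderedRing R] [Algebra ℝ R]
    (hR : PolyIVP R) {n : ℕ} (h f : MvPolynomial (Fin n) ℝ) (s : Finset R) :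
    ∀ x : Fin n → R, (∀ k, IsAlgebraic (IntermediateField.adjoin ℝ (s : Set R)) (x k)) →
      MvPolynomial.aeval x h = 0 → MvPolynomial.aeval x f ≠ 0 →
      ∃ y : Fin n → ℝ, MvPolynomial.eval y h = 0 ∧ MvPolynomial.eval y f ≠ 0 := by
  classical
  have lift : ∀ (F : IntermediateField ℝ R) (K : Subfield R), (∀ y ∈ F, y ∈ K) → ∀ y : R,
      IsAlgebraic F y → IsAlgebraic K y := by
    rintro F K hFK y ⟨p, hp0, hp⟩
    let e : F →+* K := (algebraMap F R).codRestrict K (fun g => hFK _ g.2)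
    refine ⟨p.map e, ?_, ?_⟩
    · rwa [Ne, Polynomial.map_eq_zero]
    · rw [aeval_def, eval₂_map]; exact hp
  have toSub : ∀ (K : Subfield R), (∀ r, algebraMap ℝ R r ∈ K) → ∀ s : Set R, s ⊆ K →
      ∀ y ∈ IntermediateField.adjoin ℝ s, y ∈ K := by
    intro K hK s hs y hy
    let L : IntermediateField ℝ R := { K with algebraMap_mem' := hK }
    exact (IntermediateField.adjoin_le_iff (T := L)).2 hs hy
  induction s using Finset.induction_on with
  | empty =>
    intro x hx h1 h2
    let i := algebraMap ℝ R
    obtain ⟨x', hx'⟩ := transfer hR polyIVP_real i (RingHom.id ℝ) (i.prod (RingHom.id ℝ)).range (by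
      rintro _ ⟨g, rfl⟩
      exact (real_hom_pos i g).symm) (fun e => ⟨e, rfl⟩) x (by
      intro k K hK hK'
      exact hK' _ (lift _ K (toSub K (fun r => hK _ ⟨r, rfl⟩) _ (by simp)) _ (hx k)))
    exact ⟨x', (hx' h).1 h1, fun h => h2 ((hx' f).2 h)⟩
  | insert t s _ ih =>
    intro x hx h1 h2
    let F := IntermediateField.adjoin ℝ (s : Set R)
    let E := algebraicClosure F R
    let i := algebraMap E R
    have hmem : ∀ y : R, IsAlgebraic E y → y ∈ E := by
      intro y hy
      rw [mem_algebraicClosure_iff]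
      exact hy.restrictScalars F
    obtain ⟨y, hy1, hy2⟩ := descend hR i (fun g => Iff.rfl) (by
      intro q hq z hz
      exact ⟨⟨z, hmem z ⟨q, hq, hz⟩⟩, rfl⟩) t x (by
      intro k K hK ht hK'
      refine hK' _ (lift _ K (toSub K (fun r => hK (algebraMap ℝ E r)) _ ?_) _ (hx k))
      intro z hz
      rw [Finset.coe_insert] at hz
      rcases hz with rfl | hz
      · exact ht
      · exact hK (algebraMap F E ⟨z, IntermediateField.subset_adjoin ℝ _ hz⟩))
      (MvPolynomial.map (algebraMap ℝ E) h) (MvPolynomial.map (algebraMap ℝ E) f)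
      (by rw [MvPolynomial.eval₂_map]; exact h1) (by rw [MvPolynomial.eval₂_map]; exact h2)
    have e : ∀ p, MvPolynomial.aeval (fun k => (y k : R)) p = i (MvPolynomial.eval y (MvPolynomial.map (algebraMap ℝ E) p)) := by
      intro p
      rw [MvPolynomial.eval_map, MvPolynomial.eval₂_comp_left]
      rfl
    refine ih (fun k => (y k : R)) (fun k => mem_algebraicClosure_iff.1 (y k).2) ?_ ?_
    · rw [e, hy1, map_zero]
    · rw [e]; simpa using hy2



section RealClosure

theorem IsSumSq.ringHom_map {A B : Type*} [CommRing A] [CommRing B] (f : A →+* B) {s : A}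
    (hs : IsSumSq s) : IsSumSq (f s) := by
  induction hs with
  | zero => rw [map_zero]; exact IsSumSq.zero
  | sq_add a _ ih => rw [map_add, map_mul]; exact IsSumSq.sq_add _ ih

variable {M Ω : Type*} [Field M] [Field Ω] [Algebra M Ω] [IsAlgClosed Ω]

theorem square_or_neg_sumSq (h1 : ¬ IsSumSq (-1 : M))
    (h2 : ∀ α : Ω, IsAlgebraic M α → (∃ m, algebraMap M Ω m = α) ∨
      ∃ Q : M[X], IsSumSq Q ∧ aeval α Q = -1) (x : M) : IsSquare x ∨ IsSumSq (-x) := by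
  obtain ⟨α, hα⟩ := IsAlgClosed.exists_pow_nat_eq (algebraMap M Ω x) (n := 2) (by norm_num)
  have halg : IsAlgebraic M α := ⟨X^2 - C x, (monic_X_pow_sub_C x (by norm_num)).ne_zero, by simp [hα]⟩
  by_cases hm : ∃ m, algebraMap M Ω m = α
  · obtain ⟨m, rfl⟩ := hm
    left
    refine ⟨m, (algebraMap M Ω).injective ?_⟩
    rw [map_mul, ← hα, sq]
  right
  obtain ⟨Q, hQ, hQ1⟩ := (h2 α halg).resolve_left hm
  have c1 : ∀ q : M[X], ∃ b c : M, aeval α q = algebraMap M Ω b + algebraMap M Ω c * α := by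
    intro q
    induction q using Polynomial.induction_on with
    | C a => exact ⟨a, 0, by simp⟩
    | add p q hp hq =>
      obtain ⟨b, c, h⟩ := hp
      obtain ⟨b', c', h'⟩ := hq
      exact ⟨b + b', c + c', by rw [map_add, h, h']; simp; ring⟩
    | monomial n a h =>
      obtain ⟨b, c, h⟩ := h
      refine ⟨c * x, b, ?_⟩
      rw [pow_succ, ← mul_assoc, map_mul, h, aeval_X, map_mul, ← hα]; ring
  have c2 : ∃ B D v : M, IsSumSq B ∧ IsSumSq D ∧ 
      aeval α Q = algebraMap M Ω (B + x * D) + algebraMap M Ω v * α := by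
    clear hQ1
    induction hQ with
    | zero => exact ⟨0, 0, 0, IsSumSq.zero, IsSumSq.zero, by simp⟩
    | sq_add q _ ih =>
      obtain ⟨B, D, v, hB, hD, h⟩ := ih
      obtain ⟨b, c, hbc⟩ := c1 q
      refine ⟨b * b + B, c * c + D, v + 2 * b * c, IsSumSq.sq_add _ hB, IsSumSq.sq_add _ hD, ?_⟩
      rw [map_add, map_mul, h, hbc]
      simp only [map_add, map_mul, map_ofNat, ← hα]
      ring
  obtain ⟨B, D, v, hB, hD, h⟩ := c2
  rw [hQ1] at h
  have hv : v = 0 := by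
    by_contra hv
    apply hm
    refine ⟨v⁻¹ * (-1 - (B + x * D)), ?_⟩
    have hv' : algebraMap M Ω v ≠ 0 := by simpa using hv
    rw [map_mul, map_sub, map_neg, map_one, h, map_inv₀]
    field_simp
    ring
  have h' : -1 = B + x * D := by
    apply (algebraMap M Ω).injective
    rw [map_neg, map_one, h, hv]; simp
  have hD0 : D ≠ 0 := by
    rintro rfl
    apply h1; rw [h']; simpa using hB
  have : -x = (1 * 1 + B) * D * (D⁻¹ * D⁻¹) := by
    field_simp
    linear_combination h'
  rw [this]
  exact ((IsSumSq.sq_add _ hB).mul hD).mul (IsSumSq.mul_self _)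

theorem exists_order (h1 : ¬ IsSumSq (-1 : M)) (h2 : ∀ x : M, IsSquare x ∨ IsSumSq (-x)) :
    ∃ _ : LinearOrder M, IsStrictOrderedRing M := by
  have key : ∀ s : M, IsSumSq s → IsSumSq (-s) → s = 0 := by
    intro s hs hs'
    by_contra h0
    apply h1
    have : (-1 : M) = (-s) * s * (s⁻¹ * s⁻¹) := by field_simp
    rw [this]
    exact (hs'.mul hs).mul (IsSumSq.mul_self _)
  let Cn : RingCone M := 
    { Subsemiring.sumSq M with
      eq_zero_of_mem_of_neg_mem' := fun {a} ha hb => key a (Subsemiring.mem_sumSq.1 ha) (Subsemiring.mem_sumSq.1 hb) }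
  have hm : ∀ x : M, x ∈ Cn ↔ IsSumSq x := fun x => Subsemiring.mem_sumSq
  classical
  haveI : HasMemOrNegMem Cn := ⟨fun x => by
    rw [hm, hm]
    rcases h2 x with h | h
    · exact Or.inl h.isSumSq
    · exact Or.inr h⟩
  letI o : LinearOrder M := LinearOrder.mkOfAddGroupCone Cn
  haveI := IsOrderedRing.mkOfCone Cn
  exact ⟨o, IsOrderedRing.toIsStrictOrderedRing M⟩

end RealClosure

section Factor
variable {M : Type*} [Field M] [LinearOrder M] [IsStrictOrderedRing M]

theorem exists_irreducible_factor (p : M[X]) (a b : M) (h : p.eval a * p.eval b < 0) :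
    ∃ q, Irreducible q ∧ q ∣ p ∧ q.eval a * q.eval b < 0 := by
  induction p using WfDvdMonoid.induction_on_irreducible with
  | zero => simp at h
  | unit u hu =>
    obtain ⟨c, hc, rfl⟩ := Polynomial.isUnit_iff.1 hu
    simp at h
    nlinarith [mul_self_nonneg c]
  | mul p i hp hi ih =>
    by_cases hi' : i.eval a * i.eval b < 0
    · exact ⟨i, hi, dvd_mul_right _ _, hi'⟩
    · obtain ⟨q, h1, h2, h3⟩ := ih (by
        rw [eval_mul, eval_mul] at h
        by_contra h'
        push Not at h' hi'
        nlinarith [mul_nonneg h' hi'])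
      exact ⟨q, h1, h2.mul_left _, h3⟩

theorem IsSumSq.eval_nonneg {Q : M[X]} (hQ : IsSumSq Q) (a : M) : 0 ≤ Q.eval a :=
  (hQ.ringHom_map (evalRingHom a)).nonneg

theorem reduce_sumSq (p : M[X]) (hd : 0 < p.natDegree) (Q : M[X]) (hQ : IsSumSq Q) :
    ∃ Q', IsSumSq Q' ∧ p ∣ Q - Q' ∧ Q'.natDegree ≤ 2 * (p.natDegree - 1) := by
  have hp : p ≠ 0 := by rintro rfl; simp at hd
  induction hQ with
  | zero => exact ⟨0, IsSumSq.zero, by simp, by simp⟩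
  | sq_add q _ ih =>
    obtain ⟨Q', h1, h2, h3⟩ := ih
    refine ⟨(q % p) * (q % p) + Q', IsSumSq.sq_add _ h1, ?_, ?_⟩
    · rename_i s _
      have e : q * q + s - ((q % p) * (q % p) + Q') = p * (q / p) * (q + q % p) + (s - Q') := by
        have := EuclideanDomain.div_add_mod q p
        linear_combination (-(q + q % p)) * this
      rw [e]
      exact dvd_add (by rw [mul_assoc]; exact dvd_mul_right _ _) h2
    · have hr : (q % p).natDegree ≤ p.natDegree - 1 := by
        by_cases h0 : q % p = 0
        · simp [h0]
        · have := natDegree_lt_natDegree h0 (EuclideanDomain.mod_lt q hp); omega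
      refine (natDegree_add_le _ _).trans (max_le (natDegree_mul_le.trans ?_) h3)
      omega

theorem not_dvd_one_add_sumSq (p : M[X]) (hp : Irreducible p) (a b : M)
    (hab : p.eval a * p.eval b < 0) (Q : M[X]) (hQ : IsSumSq Q) : ¬ p ∣ 1 + Q := by
  induction hn : p.natDegree using Nat.strong_induction_on generalizing p Q with
  | _ n ih =>
  intro hdvd
  have hd := hp.natDegree_pos
  obtain ⟨Q', h1, h2, h3⟩ := reduce_sumSq p hd Q hQ
  have h4 : p ∣ 1 + Q' := by
    have := dvd_sub hdvd h2
    convert this using 1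
    ring
  obtain ⟨h, hh⟩ := h4
  have hpos : ∀ x, 0 < p.eval x * h.eval x := by
    intro x
    have := congrArg (eval x) hh
    rw [eval_mul] at this
    rw [← this, eval_add, eval_one]
    linarith [h1.eval_nonneg x]
  have hh0 : h ≠ 0 := by rintro rfl; simpa using hpos 0
  have hsign : h.eval a * h.eval b < 0 := by
    have := mul_pos (hpos a) (hpos b)
    by_contra hc
    push Not at hc
    nlinarith [mul_nonneg hc (neg_nonneg.2 hab.le)]
  have hdeg : h.natDegree < p.natDegree := by
    have e := congrArg natDegree hh
    rw [natDegree_mul hp.ne_zero hh0] at e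
    have : (1 + Q').natDegree ≤ 2 * (p.natDegree - 1) :=
      (natDegree_add_le _ _).trans (max_le (by simp) h3)
    omega
  obtain ⟨f, f1, f2, f3⟩ := exists_irreducible_factor h a b hsign
  have hfd : f.natDegree < n := (natDegree_le_of_dvd f2 hh0).trans_lt (hn ▸ hdeg)
  exact ih _ hfd f f1 f3 Q' h1 rfl (hh ▸ f2.mul_left p)

theorem polyIVP_of_maximal {Ω : Type*} [Field Ω] [Algebra M Ω] [IsAlgClosed Ω]
    (h2 : ∀ α : Ω, IsAlgebraic M α → (∃ m, algebraMap M Ω m = α) ∨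
      ∃ Q : M[X], IsSumSq Q ∧ aeval α Q = -1) : PolyIVP M := by
  intro p a b hab hp
  obtain ⟨f, f1, f2, f3⟩ := exists_irreducible_factor p a b hp
  obtain ⟨α, hα⟩ := IsAlgClosed.exists_aeval_eq_zero Ω f (degree_pos_of_irreducible f1).ne'
  rcases h2 α ⟨f, f1.ne_zero, hα⟩ with ⟨m, rfl⟩ | ⟨Q, hQ, hQ1⟩
  · have hm : f.eval m = 0 := by
      rw [aeval_algebraMap_apply] at hα
      simpa using hα
    obtain ⟨g, rfl⟩ := dvd_iff_isRoot.2 hm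
    have hg : IsUnit g := (f1.isUnit_or_isUnit rfl).resolve_left (not_isUnit_X_sub_C m)
    obtain ⟨c, hc, rfl⟩ := Polynomial.isUnit_iff.1 hg
    obtain ⟨r, rfl⟩ := f2
    simp at f3
    have hc2 : 0 < c * c := mul_self_pos.2 hc.ne_zero
    have h4 : (a - m) * (b - m) < 0 := by
      by_contra h
      push Not at h
      nlinarith [mul_nonneg h hc2.le]
    rcases mul_neg_iff.1 h4 with ⟨h5, h6⟩ | ⟨h5, h6⟩
    · linarith
    · exact ⟨m, by linarith, by linarith, by simp⟩
  · exfalso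
    refine not_dvd_one_add_sumSq f f1 a b f3 Q hQ ?_
    have h3 : minpoly M α ∣ 1 + Q := minpoly.dvd M α (by simp [hQ1])
    have h4 : minpoly M α ∣ f := minpoly.dvd M α hα
    have hint : IsIntegral M α := IsAlgebraic.isIntegral ⟨f, f1.ne_zero, hα⟩
    exact ((minpoly.irreducible hint).associated_of_dvd f1 h4).dvd_iff_dvd_left.1 h3

end Factor

theorem exists_maximal_semireal {Ω : Type*} [Field Ω] (M₀ : Subfield Ω) (h : ¬ IsSumSq (-1 : M₀)) :
    ∃ M : Subfield Ω, M₀ ≤ M ∧ Maximal (fun M : Subfield Ω => ¬ IsSumSq (-1 : M)) M := by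
  refine zorn_le_nonempty₀ {M : Subfield Ω | ¬ IsSumSq (-1 : M)} ?_ M₀ h
  intro c hc hchain y hy
  refine ⟨sSup c, ?_, fun z hz => le_sSup hz⟩
  intro hs
  have key : ∀ s : ↥(sSup c), IsSumSq s → ∃ F ∈ c, ∃ s' : F, IsSumSq s' ∧ (s' : Ω) = s := by
    intro s hs
    induction hs with
    | zero => exact ⟨y, hy, 0, IsSumSq.zero, by simp⟩
    | sq_add a _ ih =>
      obtain ⟨F, hF, s', hs', e⟩ := ih
      obtain ⟨F', hF', ha⟩ := (Subfield.mem_sSup_of_directedOn ⟨y, hy⟩ hchain.directedOn).1 a.2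
      obtain ⟨L, hL, h1, h2⟩ := hchain.directedOn F hF F' hF'
      refine ⟨L, hL, ⟨a, h2 ha⟩ * ⟨a, h2 ha⟩ + Subfield.inclusion h1 s', IsSumSq.sq_add _ (hs'.ringHom_map _), ?_⟩
      simp [← e, Subfield.inclusion]
  obtain ⟨F, hF, s', hs', e⟩ := key _ hs
  apply hc hF
  convert hs'
  apply Subtype.ext
  rw [e]; simp

/-- A formally real field embeds in an ordered field with the intermediate value property. -/
theorem exists_realClosure (K : Type) [Field K] (hK : ¬ IsSumSq (-1 : K)) :
    ∃ (R : Type) (_ : Field R) (_ : LinearOrder R) (_ : IsStrictOrderedRing R),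
      PolyIVP R ∧ Nonempty (K →+* R) := by
  let Ω := AlgebraicClosure K
  let i : K →+* Ω := algebraMap K Ω
  obtain ⟨M, hM0, hM⟩ := exists_maximal_semireal i.fieldRange (by
    intro h
    apply hK
    have e := RingEquiv.ofBijective _ i.rangeRestrictField_bijective
    have := h.ringHom_map (e.symm : i.fieldRange →+* K)
    simpa using this)
  have h2 : ∀ α : Ω, IsAlgebraic M α → (∃ m, algebraMap M Ω m = α) ∨
      ∃ Q : M[X], IsSumSq Q ∧ aeval α Q = -1 := by
    intro α hα
    let N := IntermediateField.adjoin M {α}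
    have hMN : M ≤ N.toSubfield := fun x hx => N.algebraMap_mem ⟨x, hx⟩
    have hαN : α ∈ N := IntermediateField.mem_adjoin_simple_self M α
    by_cases hN : IsSumSq (-1 : N.toSubfield)
    · right
      have key : ∀ s : N.toSubfield, IsSumSq s → ∃ Q : M[X], IsSumSq Q ∧ aeval α Q = s := by
        intro s hs
        induction hs with
        | zero => exact ⟨0, IsSumSq.zero, by simp⟩
        | sq_add a _ ih =>
          obtain ⟨Q, hQ, e⟩ := ih
          have ha : (a : Ω) ∈ N.toSubalgebra := a.2
          rw [IntermediateField.adjoin_simple_toSubalgebra_of_isAlgebraic hα,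
            Algebra.adjoin_singleton_eq_range_aeval] at ha
          obtain ⟨q, hq⟩ := ha
          have hq' : aeval α q = (a : Ω) := hq
          exact ⟨q * q + Q, IsSumSq.sq_add _ hQ, by simp [e, hq']⟩
      obtain ⟨Q, hQ, e⟩ := key _ hN
      exact ⟨Q, hQ, by rw [e]; simp⟩
    · left
      exact ⟨⟨α, hM.le_of_ge hN hMN hαN⟩, rfl⟩
  obtain ⟨o, ho⟩ := exists_order hM.prop (square_or_neg_sumSq hM.prop h2)
  exact ⟨M, inferInstance, o, ho, polyIVP_of_maximal h2,
    ⟨i.codRestrict M (fun x => hM0 ⟨x, rfl⟩)⟩⟩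


section Nullstellensatz

theorem IsSumSq.exists_fin_sum {A : Type*} [CommRing A] {s : A} (hs : IsSumSq s) :
    ∃ (l : ℕ) (gi : Fin l → A), s = ∑ i, (gi i) ^ 2 := by
  induction hs with
  | zero => exact ⟨0, Fin.elim0, by simp⟩
  | sq_add a _ ih =>
    obtain ⟨l, gi, rfl⟩ := ih
    exact ⟨l + 1, Fin.cons a gi, by simp [Fin.sum_univ_succ, sq]⟩

/-- Real ideals: sums of squares in the ideal have summands in the ideal. -/
def RealIdeal {A : Type*} [CommRing A] (J : Ideal A) : Prop :=
  ∀ g s : A, IsSumSq s → g * g + s ∈ J → g ∈ J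

theorem RealIdeal.colon {A : Type*} [CommRing A] {J : Ideal A} (hJ : RealIdeal J) (a : A) :
    ∃ J' : Ideal A, RealIdeal J' ∧ ∀ g, g ∈ J' ↔ a * g ∈ J := by
  refine ⟨Submodule.comap (LinearMap.mulLeft A a) J, ?_, fun g => Iff.rfl⟩
  intro g s hs h
  change a * (g * g + s) ∈ J at h
  change a * g ∈ J
  have h2 : (a * g) * (a * g) + (a * a) * s ∈ J := by
    have := J.mul_mem_left a h
    convert this using 1
    ring
  exact hJ _ _ ((IsSumSq.mul_self a).mul hs) h2

theorem RealIdeal.exists_prime {A : Type*} [CommRing A] [IsNoetherianRing A] {I : Ideal A}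
    (hI : RealIdeal I) {f : A} (hf : f ∉ I) :
    ∃ J : Ideal A, I ≤ J ∧ RealIdeal J ∧ f ∉ J ∧ J.IsPrime := by
  obtain ⟨J, ⟨hIJ, hJ, hfJ⟩, hmax⟩ := set_has_maximal_iff_noetherian.mpr
    (inferInstance : IsNoetherian A A)
    {J : Ideal A | I ≤ J ∧ RealIdeal J ∧ f ∉ J} ⟨I, le_refl _, hI, hf⟩
  have key : ∀ a b : A, a * b ∈ J → b ∉ J → a * f ∈ J := by
    intro a b hab hb
    obtain ⟨J', hJ', hmem⟩ := hJ.colon a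
    by_contra hcon
    have hle : J ≤ J' := fun g hg => (hmem g).2 (Ideal.mul_mem_left J a hg)
    refine hmax J' ⟨hIJ.trans hle, hJ', fun h => hcon ((hmem f).1 h)⟩ (lt_of_le_of_ne hle ?_)
    rintro rfl
    exact hb ((hmem b).2 hab)
  refine ⟨J, hIJ, hJ, hfJ, ⟨?_, ?_⟩⟩
  · rintro rfl
    exact hfJ trivial
  · intro a b hab
    by_contra! hcon
    have h1 : f * a ∈ J := by
      rw [mul_comm]
      exact key a b hab hcon.2
    have h2 : f * f ∈ J := key f a h1 hcon.1
    exact hfJ (hJ f 0 IsSumSq.zero (by simpa using h2))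

theorem sumSq_fraction {A K : Type*} [CommRing A] [IsDomain A] [Field K] [Algebra A K]
    [IsFractionRing A K] {s : K} (hs : IsSumSq s) :
    ∃ b t : A, b ≠ 0 ∧ IsSumSq t ∧ s * algebraMap A K b * algebraMap A K b = algebraMap A K t := by
  induction hs with
  | zero => exact ⟨1, 0, one_ne_zero, IsSumSq.zero, by simp⟩
  | sq_add a _ ih =>
    obtain ⟨b, t, hb, ht, h⟩ := ih
    obtain ⟨p, q, hq, rfl⟩ := IsFractionRing.div_surjective (A := A) a
    have hq0 : q ≠ 0 := nonZeroDivisors.ne_zero hq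
    have hq1 : algebraMap A K q ≠ 0 := by
      simpa using hq0
    refine ⟨b * q, (p * b) * (p * b) + (q * q) * t, mul_ne_zero hb hq0,
      IsSumSq.sq_add _ ((IsSumSq.mul_self q).mul ht), ?_⟩
    simp only [map_mul, map_add, ← h]
    field_simp

theorem sumSq_lift {A B : Type*} [CommRing A] [CommRing B] (f : A →+* B)
    (hf : Function.Surjective f) {s : B} (hs : IsSumSq s) : ∃ t, IsSumSq t ∧ f t = s := by
  induction hs with
  | zero => exact ⟨0, IsSumSq.zero, by simp⟩
  | sq_add a _ ih =>
    obtain ⟨t, ht, rfl⟩ := ih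
    obtain ⟨a, rfl⟩ := hf a
    exact ⟨a * a + t, IsSumSq.sq_add _ ht, by simp⟩

theorem RealIdeal.exists_hom {A : Type} [CommRing A] {J : Ideal A} (hJ : RealIdeal J)
    (hp : J.IsPrime) :
    ∃ (R : Type) (_ : Field R) (_ : LinearOrder R) (_ : IsStrictOrderedRing R),
      PolyIVP R ∧ ∃ φ : A →+* R, ∀ p, φ p = 0 ↔ p ∈ J := by
  have hK : ¬ IsSumSq (-1 : FractionRing (A ⧸ J)) := by
    intro h
    obtain ⟨b, t, hb, ht, h⟩ := sumSq_fraction (A := A ⧸ J) h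
    have h2 : b * b + t = 0 := by
      apply IsFractionRing.injective (A ⧸ J) (FractionRing (A ⧸ J))
      rw [map_add, map_mul, map_zero, ← h]
      ring
    obtain ⟨t, ht', rfl⟩ := sumSq_lift (Ideal.Quotient.mk J) Ideal.Quotient.mk_surjective ht
    obtain ⟨b, rfl⟩ := Ideal.Quotient.mk_surjective b
    rw [← map_mul, ← map_add, Ideal.Quotient.eq_zero_iff_mem] at h2
    exact hb (Ideal.Quotient.eq_zero_iff_mem.2 (hJ b t ht' h2))
  obtain ⟨R, i1, i2, i3, hR, ⟨ψ⟩⟩ := exists_realClosure _ hK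
  refine ⟨R, i1, i2, i3, hR, (ψ.comp (algebraMap (A ⧸ J) _)).comp (Ideal.Quotient.mk J), ?_⟩
  intro p
  rw [RingHom.comp_apply, RingHom.comp_apply, map_eq_zero_iff ψ ψ.injective,
    map_eq_zero_iff _ (IsFractionRing.injective (A ⧸ J) (FractionRing (A ⧸ J))),
    Ideal.Quotient.eq_zero_iff_mem]

theorem RealIdeal.exists_point {n : ℕ} {I : Ideal (MvPolynomial (Fin n) ℝ)} (hI : RealIdeal I)
    {f : MvPolynomial (Fin n) ℝ} (hf : f ∉ I) :
    ∃ y : Fin n → ℝ, (∀ g ∈ I, MvPolynomial.eval y g = 0) ∧ MvPolynomial.eval y f ≠ 0 := by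
  obtain ⟨J, hIJ, hJ, hfJ, hp⟩ := hI.exists_prime hf
  obtain ⟨R, i1, i2, i3, hR, φ, hφ⟩ := hJ.exists_hom hp
  letI : Algebra ℝ R := (φ.comp MvPolynomial.C).toAlgebra
  have haev : ∀ p, MvPolynomial.aeval (fun k => φ (MvPolynomial.X k)) p = φ p := by
    intro p
    have : (MvPolynomial.aeval (R := ℝ) (fun k => φ (MvPolynomial.X k))).toRingHom = φ := by
      apply MvPolynomial.ringHom_ext
      · intro r
        simp [RingHom.algebraMap_toAlgebra]
      · intro i
        simp
    exact congrArg (fun g : _ →+* R => g p) this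
  obtain ⟨S, hS⟩ := (isNoetherianRing_iff_ideal_fg _).1
    (inferInstance : IsNoetherianRing (MvPolynomial (Fin n) ℝ)) I
  have hSI : ∀ p ∈ S, p ∈ I := fun p hpS => hS ▸ Ideal.subset_span hpS
  classical
  obtain ⟨y, hy, hyf⟩ := real_point hR (∑ p ∈ S, p * p) f
    (Finset.univ.image fun k => φ (MvPolynomial.X k)) (fun k => φ (MvPolynomial.X k))
    (by
      intro k
      have hm : φ (MvPolynomial.X k) ∈ IntermediateField.adjoin ℝ
          ((Finset.univ.image fun k => φ (MvPolynomial.X k) : Finset R) : Set R) :=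
        IntermediateField.subset_adjoin _ _ (by simp)
      exact isAlgebraic_algebraMap (⟨_, hm⟩ : IntermediateField.adjoin ℝ
          ((Finset.univ.image fun k => φ (MvPolynomial.X k) : Finset R) : Set R)))
    (by
      rw [haev, hφ]
      exact Ideal.sum_mem _ fun p hpS => J.mul_mem_left p (hIJ (hSI p hpS)))
    (by
      rw [haev, Ne, hφ]
      exact hfJ)
  refine ⟨y, ?_, hyf⟩
  rw [map_sum, Finset.sum_eq_zero_iff_of_nonneg
    (fun p _ => by rw [map_mul]; exact mul_self_nonneg _)] at hy
  have hle : I ≤ RingHom.ker (MvPolynomial.eval y) := by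
    rw [← hS]
    refine Ideal.span_le.2 fun p hpS => ?_
    have := hy p hpS
    rw [map_mul, mul_self_eq_zero] at this
    exact this
  exact fun g hg => hle hg

end Nullstellensatz


end Helpers


/-- The zero set of an ideal of real polynomials. -/
def zeroSet (n : ℕ) (I : Ideal (MvPolynomial (Fin n) ℝ)) : Set (Fin n → ℝ) :=
  {x | ∀ g ∈ I, MvPolynomial.eval x g = 0}

/-- The real radical of an ideal. -/
def realRadical (n : ℕ) (I : Ideal (MvPolynomial (Fin n) ℝ)) : Set (MvPolynomial (Fin n) ℝ) :=
  {g | ∃ k : ℕ, 1 ≤ k ∧ ∃ (ℓ : ℕ) (gi : Fin ℓ → MvPolynomial (Fin n) ℝ),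
    g ^ (2 * k) + ∑ i, (gi i) ^ 2 ∈ I}

/-- The ideal of polynomials vanishing on a subset `X ⊆ ℝⁿ`. -/
noncomputable def vanishingIdeal (n : ℕ) (X : Set (Fin n → ℝ)) : Ideal (MvPolynomial (Fin n) ℝ) where
  carrier := {g | ∀ x ∈ X, MvPolynomial.eval x g = 0}
  add_mem' := by
    intro a b ha hb x hx
    simp [map_add, ha x hx, hb x hx]
  zero_mem' := by
    intro x _
    simp
  smul_mem' := by
    intro c a ha x hx
    simp [smul_eq_mul, ha x hx]

/-- `Z` and `𝓘` give an inclusion-reversing bijection between real radically closed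
ideals of `ℝ[X₁,...,Xₙ]` and real algebraic subsets of `ℝⁿ`. -/
theorem zero_vanishing_bijection (n : ℕ) :
    (∀ I : Ideal (MvPolynomial (Fin n) ℝ),
        (I : Set (MvPolynomial (Fin n) ℝ)) = realRadical n I →
        vanishingIdeal n (zeroSet n I) = I) ∧
    (∀ X : Set (Fin n → ℝ), (∃ J : Ideal (MvPolynomial (Fin n) ℝ), X = zeroSet n J) →
        zeroSet n (vanishingIdeal n X) = X) ∧
    (∀ X : Set (Fin n → ℝ),
        ((vanishingIdeal n X : Set (MvPolynomial (Fin n) ℝ)) =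
          realRadical n (vanishingIdeal n X))) ∧
    (∀ I J : Ideal (MvPolynomial (Fin n) ℝ), I ≤ J → zeroSet n J ⊆ zeroSet n I) ∧
    (∀ X Y : Set (Fin n → ℝ), X ⊆ Y → vanishingIdeal n Y ≤ vanishingIdeal n X) := by
  refine ⟨?_, ?_, ?_, ?_, ?_⟩
  · intro I hI
    apply le_antisymm
    · intro f hf
      have hreal : RealIdeal I := by
        intro g s hs h
        obtain ⟨l, gi, rfl⟩ := hs.exists_fin_sum
        have hg : g ∈ realRadical n I :=
          ⟨1, le_refl _, l, gi, by simpa [sq] using h⟩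
        rw [← hI] at hg
        exact hg
      by_contra hfI
      obtain ⟨y, hy, hyf⟩ := hreal.exists_point hfI
      exact hyf (hf y hy)
    · intro g hg x hx
      exact hx g hg
  · rintro X ⟨J, rfl⟩
    apply Set.Subset.antisymm
    · intro x hx g hg
      exact hx g (fun y hy => hy g hg)
    · intro x hx g hg
      exact hg x hx
  · intro X
    apply Set.Subset.antisymm
    · intro g hg
      refine ⟨1, le_refl _, 0, Fin.elim0, ?_⟩
      have : g ^ (2 * 1) ∈ vanishingIdeal n X := Ideal.pow_mem_of_mem _ hg _ (by norm_num)
      simpa using this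
    · rintro g ⟨k, hk, l, gi, h⟩ x hx
      have h1 := h x hx
      rw [map_add, map_pow, map_sum, pow_mul] at h1
      have h2 : 0 ≤ ∑ i, MvPolynomial.eval x (gi i ^ 2) :=
        Finset.sum_nonneg fun i _ => by rw [map_pow]; positivity
      have h3 : 0 ≤ ((MvPolynomial.eval x g) ^ 2) ^ k := by positivity
      have h4 : ((MvPolynomial.eval x g) ^ 2) ^ k = 0 := by linarith
      rw [← pow_mul] at h4
      exact pow_eq_zero_iff (by omega) |>.1 h4
  · intro I J hIJ x hx g hg
    exact hx g (hIJ hg)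
  · intro X Y hXY g hg x hx
    exact hg x (hXY hx)
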